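/- For every integer N ≥ 0, as λ → +∞ through real values, ∫_0^1 e^{−λ(−x − log(1−x))} dx = Σ_{n=0}^{N−1} Γ((n+1)/2) (−1)^n c_n λ^{−(n+1)/2} + O(λ^{−(N+1)/2}); that is, the coefficients for this integral are (−1)^n c_n, where c_n are the coefficients for ∫_0^{+∞} e^{−λ(x − log(1+x))} dx. -/

import Mathlib

open Finset MeasureTheory Real Asymptotics Filter

/-- Partial ordinary Bell polynomials: `obell f n k` is the coefficient of `x^n` in
`(∑_{m ≥ 1} f m * x^m)^k`, i.e. `B_{n,k}(f₁, …, f_{n-k+1})`. -/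
noncomputable def obell (f : ℕ → ℝ) (n k : ℕ) : ℝ :=
  PowerSeries.coeff n ((PowerSeries.mk fun m => if m = 0 then 0 else f m) ^ k)

/-- The coefficients of the asymptotic expansion of `∫_0^∞ e^{-λ(x - log(1+x))} dx`:
`c_n = (1/(2Γ((n+1)/2))) ∑_{k=0}^n ((-1)^k 2^{(n+1)/2+k}/k!) Γ((n+1)/2+k)
B_{n,k}(a₁,…,a_{n-k+1})` with `a_m = (-1)^m/(m+2)`. -/
noncomputable def laplaceCoeff (n : ℕ) : ℝ :=
  (1 / (2 * Real.Gamma (((n : ℝ) + 1) / 2))) *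
    ∑ k ∈ Finset.range (n + 1),
      ((-1 : ℝ) ^ k * (2 : ℝ) ^ (((n : ℝ) + 1) / 2 + k) / (Nat.factorial k : ℝ)) *
        Real.Gamma (((n : ℝ) + 1) / 2 + k) *
        obell (fun m => (-1 : ℝ) ^ m / ((m : ℝ) + 2)) n k

lemma exp_rem (N : ℕ) : ∃ C : ℝ, 0 ≤ C ∧ ∀ u : ℝ, 0 ≤ u →
    |Real.exp (-u) - ∑ k ∈ Finset.range N, (-u) ^ k / (Nat.factorial k : ℝ)| ≤ C * u ^ N := by
  rcases Nat.eq_zero_or_pos N with rfl | hN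
  · refine ⟨1, by norm_num, fun u hu => ?_⟩
    simp [abs_of_pos (Real.exp_pos _), hu]
  refine ⟨((N.succ : ℝ) / ((N.factorial : ℝ) * N)) + (1 + N), by positivity, fun u hu => ?_⟩
  rcases le_total u 1 with h | h
  · have := Real.exp_bound (x := -u) (by rw [abs_neg, abs_of_nonneg hu]; exact h) hN
    rw [abs_neg, abs_of_nonneg hu] at this
    refine this.trans ?_
    rw [mul_comm]
    gcongr
    have : (0:ℝ) ≤ 1 + N := by positivity
    linarith
  · have h1 : |Real.exp (-u)| ≤ u ^ N := by
      rw [abs_of_pos (Real.exp_pos _)]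
      exact (Real.exp_le_one_iff.2 (by linarith)).trans (one_le_pow₀ h)
    have h2 : |∑ k ∈ Finset.range N, (-u) ^ k / (Nat.factorial k : ℝ)| ≤ N * u ^ N := by
      refine (Finset.abs_sum_le_sum_abs _ _).trans ?_
      refine (Finset.sum_le_card_nsmul _ _ (u ^ N) ?_).trans (by simp)
      intro k hk
      rw [abs_div, abs_pow, abs_neg, abs_of_nonneg hu, Nat.abs_cast]
      have hf : (1:ℝ) ≤ k.factorial := by exact_mod_cast Nat.factorial_pos k
      refine (div_le_self (by positivity) hf).trans ?_
      exact pow_le_pow_right₀ h (Finset.mem_range.1 hk).le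
    refine (abs_sub _ _).trans ?_
    have : 0 ≤ ((N.succ : ℝ) / ((N.factorial : ℝ) * N)) * u ^ N := by positivity
    nlinarith

/-- `f` agrees with the truncation of `p` up to `O(x^N)` on `(0,1/2]`. -/
def Appr (N : ℕ) (f : ℝ → ℝ) (p : PowerSeries ℝ) : Prop :=
  ∃ C : ℝ, 0 ≤ C ∧ ∀ x : ℝ, 0 < x → x ≤ 1 / 2 →
    |f x - (PowerSeries.trunc N p).eval x| ≤ C * x ^ N

lemma poly_bdd (p : Polynomial ℝ) : ∃ C : ℝ, 0 ≤ C ∧ ∀ x : ℝ, 0 < x → x ≤ 1 / 2 → |p.eval x| ≤ C := by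
  obtain ⟨C, hC⟩ := (isCompact_Icc (a := (0:ℝ)) (b := 1/2)).exists_bound_of_continuousOn
    (f := fun x => p.eval x) p.continuous.continuousOn
  refine ⟨max C 0, le_max_right _ _, fun x h0 h1 => (hC x ⟨h0.le, h1⟩).trans (le_max_left _ _)⟩

lemma Appr.mul {N : ℕ} {f h : ℝ → ℝ} {p q : PowerSeries ℝ} (hf : Appr N f p) (hh : Appr N h q) :
    Appr N (fun x => f x * h x) (p * q) := by
  obtain ⟨C, hC0, hC⟩ := hf
  obtain ⟨D, hD0, hD⟩ := hh
  obtain ⟨P, hP0, hP⟩ := poly_bdd (PowerSeries.trunc N p)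
  obtain ⟨Q, hQ0, hQ⟩ := poly_bdd (PowerSeries.trunc N q)
  have hdvd : (Polynomial.X ^ N : Polynomial ℝ) ∣
      PowerSeries.trunc N p * PowerSeries.trunc N q - PowerSeries.trunc N (p * q) := by
    rw [Polynomial.X_pow_dvd_iff]
    intro d hd
    rw [Polynomial.coeff_sub, PowerSeries.coeff_trunc, if_pos hd,
      PowerSeries.coeff_mul_eq_coeff_trunc_mul_trunc p q hd, sub_eq_zero,
      ← Polynomial.coe_mul, Polynomial.coeff_coe]
  obtain ⟨r, hr⟩ := hdvd
  obtain ⟨R, hR0, hR⟩ := poly_bdd r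
  refine ⟨C * (Q + D) + P * D + R, by positivity, fun x h0 h1 => ?_⟩
  have e := congrArg (Polynomial.eval x) hr
  simp only [Polynomial.eval_sub, Polynomial.eval_mul, Polynomial.eval_pow, Polynomial.eval_X] at e
  have hx1 : x ^ N ≤ 1 := pow_le_one₀ h0.le (by linarith)
  have hx0 : 0 < x ^ N := by positivity
  have a1 := hC x h0 h1
  have a2 := hD x h0 h1
  have a3 := hP x h0 h1
  have a4 := hQ x h0 h1
  have a5 := hR x h0 h1
  have hb : |h x| ≤ Q + D := by
    have : h x = (PowerSeries.trunc N q).eval x + (h x - (PowerSeries.trunc N q).eval x) := by ring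
    rw [this]
    refine (abs_add_le _ _).trans (add_le_add a4 (a2.trans ?_))
    nlinarith
  set tp := (PowerSeries.trunc N p).eval x
  set tq := (PowerSeries.trunc N q).eval x
  have : f x * h x - (PowerSeries.trunc N (p * q)).eval x =
      (f x - tp) * h x + tp * (h x - tq) + x ^ N * r.eval x := by rw [← e]; ring
  rw [this]
  calc _ ≤ |f x - tp| * |h x| + |tp| * |h x - tq| + x ^ N * |r.eval x| := by
        refine (abs_add_le _ _).trans (add_le_add ((abs_add_le _ _).trans ?_) ?_)
        · rw [abs_mul, abs_mul]
        · rw [abs_mul, abs_of_pos hx0]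
    _ ≤ (C * x ^ N) * (Q + D) + P * (D * x ^ N) + x ^ N * R := by gcongr
    _ = _ := by ring

lemma Appr.one (N : ℕ) : Appr N (fun _ => 1) 1 := by
  rcases N with _ | N
  · exact ⟨1, by norm_num, fun x _ _ => by simp⟩
  · exact ⟨0, le_rfl, fun x _ _ => by simp⟩

lemma Appr.pow {N : ℕ} {f : ℝ → ℝ} {p : PowerSeries ℝ} (hf : Appr N f p) (k : ℕ) :
    Appr N (fun x => f x ^ k) (p ^ k) := by
  induction k with
  | zero => simpa using Appr.one N
  | succ k ih => simpa only [pow_succ] using ih.mul hf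

noncomputable def ph (x : ℝ) : ℝ := -x - Real.log (1 - x)
noncomputable def gg (x : ℝ) : ℝ := ph x / x ^ 2 - 1 / 2
noncomputable def gser : PowerSeries ℝ :=
  PowerSeries.mk fun m => if m = 0 then 0 else 1 / ((m : ℝ) + 2)

lemma ph_ge {x : ℝ} (h0 : 0 < x) (h1 : x < 1) : x ^ 2 / 2 ≤ ph x := by
  have h := Real.hasSum_pow_div_log_of_abs_lt_one (x := x) (by rwa [abs_of_pos h0])
  have := sum_le_hasSum (Finset.range 2) (fun i _ => by positivity) h
  norm_num [Finset.sum_range_succ] at this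
  unfold ph; linarith

lemma trunc_eval (N : ℕ) (p : PowerSeries ℝ) (x : ℝ) :
    (PowerSeries.trunc N p).eval x = ∑ n ∈ Finset.range N, PowerSeries.coeff n p * x ^ n := by
  exact PowerSeries.eval₂_trunc_eq_sum_range x (RingHom.id ℝ) N p

lemma gg_appr (N : ℕ) : Appr N gg gser := by
  refine ⟨3, by norm_num, fun x h0 h1 => ?_⟩
  have hb := Real.abs_log_sub_add_sum_range_le (x := x) (by rw [abs_of_pos h0]; linarith) (N+2)
  rw [abs_of_pos h0] at hb
  have hx2 : 0 < x ^ 2 := by positivity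
  have e1 : ∑ i ∈ Finset.range (N+2), x ^ (i+1) / ((i:ℝ)+1) = x + x ^ 2 / 2 +
      x ^ 2 * ((PowerSeries.trunc (N+1) gser).eval x) := by
    rw [trunc_eval, Finset.sum_range_succ', Finset.sum_range_succ', Finset.sum_range_succ',
      mul_add, Finset.mul_sum]
    simp [gser]
    have : ∀ i ∈ Finset.range N, x ^ (i+1+1+1) / ((i:ℝ)+1+1+1) =
        x ^ 2 * (((i:ℝ)+1+2)⁻¹ * x ^ (i+1)) := by
      intro i _
      rw [show (i:ℝ)+1+2 = i+1+1+1 by ring]; ring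
    rw [Finset.sum_congr rfl this]; ring
  have e2 : (PowerSeries.trunc (N+1) gser).eval x = (PowerSeries.trunc N gser).eval x +
      PowerSeries.coeff N gser * x ^ N := by
    rw [trunc_eval, trunc_eval, Finset.sum_range_succ]
  have e3 : |PowerSeries.coeff N gser| ≤ 1 := by
    simp only [gser, PowerSeries.coeff_mk]
    split_ifs
    · simp
    · rw [abs_of_pos (by positivity), div_le_one (by positivity)]
      have : (0:ℝ) ≤ N := by positivity
      linarith
  have e4 : gg x - (PowerSeries.trunc (N+1) gser).eval x = - (∑ i ∈ Finset.range (N+2), x ^ (i+1) / ((i:ℝ)+1) + Real.log (1 - x)) / x ^ 2 := by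
    rw [e1, gg, ph]; field_simp; ring
  have e5 : |gg x - (PowerSeries.trunc (N+1) gser).eval x| ≤ 2 * x ^ N := by
    rw [e4, abs_div, abs_neg, abs_of_pos hx2, div_le_iff₀ hx2]
    refine hb.trans ?_
    rw [div_le_iff₀ (by linarith)]
    have : 0 < x ^ (N+2) := by positivity
    have e : x ^ (N+2+1) = x ^ (N+2) * x := pow_succ _ _
    have e' : 2 * x ^ N * x ^ 2 = 2 * x ^ (N+2) := by ring
    rw [e, e']; nlinarith
  have : gg x - (PowerSeries.trunc N gser).eval x =
    (gg x - (PowerSeries.trunc (N+1) gser).eval x) + PowerSeries.coeff N gser * x ^ N := by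
    rw [e2]; ring
  rw [this]
  refine (abs_add_le _ _).trans ?_
  rw [abs_mul, abs_of_pos (show 0 < x ^ N by positivity)]
  have : 0 < x ^ N := by positivity
  nlinarith

/-- pointwise expansion -/
lemma pointwise (N : ℕ) : ∃ C : ℝ, 0 ≤ C ∧ ∀ l x : ℝ, 0 < l → 0 < x →
    |(Set.Ioo (0:ℝ) 1).indicator (fun x => Real.exp (-l * ph x)) x -
      ∑ n ∈ Finset.range N, ∑ k ∈ Finset.range N, ((-1) ^ k / (Nat.factorial k : ℝ) *
        PowerSeries.coeff n (gser ^ k)) * (l ^ k * (x ^ (n + 2 * k) * Real.exp (-(l/2) * x ^ 2)))|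
    ≤ C * ∑ k ∈ Finset.range (N+1), l ^ k * (x ^ (N + 2 * k) * Real.exp (-(l/2) * x ^ 2)) := by
  obtain ⟨E, hE0, hE⟩ := exp_rem N
  obtain ⟨G, hG0, hG⟩ := gg_appr 1
  choose D hD0 hD using fun k => (gg_appr N).pow k
  set A : ℕ → ℕ → ℝ := fun n k => (-1) ^ k / (Nat.factorial k : ℝ) *
        PowerSeries.coeff n (gser ^ k) with hA
  set C1 : ℝ := E * G ^ N + ∑ k ∈ Finset.range N, D k
  set C2 : ℝ := 2 ^ N + ∑ k ∈ Finset.range N, ∑ n ∈ Finset.range N, |A n k| * 2 ^ N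
  have hC1 : 0 ≤ C1 := by
    have := Finset.sum_nonneg (s := Finset.range N) (fun k _ => hD0 k)
    positivity
  have hC2 : 0 ≤ C2 := by positivity
  refine ⟨C1 + C2, by positivity, fun l x hl hx => ?_⟩
  set S := ∑ k ∈ Finset.range (N+1), l ^ k * x ^ (N + 2 * k) with hS
  set w := Real.exp (-(l/2) * x ^ 2) with hw
  have hw0 : 0 < w := Real.exp_pos _
  have hS0 : 0 ≤ S := by positivity
  have hSk : ∀ k < N + 1, l ^ k * x ^ (N + 2 * k) ≤ S := fun k hk =>
    Finset.single_le_sum (f := fun k => l ^ k * x ^ (N + 2 * k)) (fun i _ => by positivity)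
      (Finset.mem_range.2 hk)
  have r1 : ∑ k ∈ Finset.range (N+1), l ^ k * (x ^ (N + 2 * k) * w) = S * w := by
    rw [hS, Finset.sum_mul]; exact Finset.sum_congr rfl fun _ _ => by ring
  have r2 : ∑ n ∈ Finset.range N, ∑ k ∈ Finset.range N, A n k * (l ^ k * (x ^ (n + 2 * k) * w))
      = (∑ k ∈ Finset.range N, ∑ n ∈ Finset.range N, A n k * (l ^ k * x ^ (n + 2 * k))) * w := by
    rw [Finset.sum_comm, Finset.sum_mul]
    refine Finset.sum_congr rfl fun _ _ => ?_
    rw [Finset.sum_mul]; exact Finset.sum_congr rfl fun _ _ => by ring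
  rw [r1, r2]
  set P := ∑ k ∈ Finset.range N, ∑ n ∈ Finset.range N, A n k * (l ^ k * x ^ (n + 2 * k)) with hP
  rcases le_or_gt x (1/2) with h | h
  · have hmem : x ∈ Set.Ioo (0:ℝ) 1 := ⟨hx, by linarith⟩
    rw [Set.indicator_of_mem hmem]
    have hg0 : 0 ≤ gg x := by
      have := ph_ge hx hmem.2
      rw [gg, sub_nonneg, le_div_iff₀ (by positivity)]; linarith
    have hgx : gg x ≤ G * x := by
      have := hG x hx h
      rw [trunc_eval] at this
      simp [gser] at this
      exact (le_abs_self _).trans this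
    set u := l * x ^ 2 * gg x with hu
    have hu0 : 0 ≤ u := by positivity
    have he : Real.exp (-l * ph x) = Real.exp (-u) * w := by
      rw [hw, ← Real.exp_add]; congr 1
      rw [hu, gg]; field_simp; ring
    have b1 : |Real.exp (-u) - ∑ k ∈ Finset.range N, (-u) ^ k / (Nat.factorial k : ℝ)| ≤ E * G ^ N * S := by
      refine (hE u hu0).trans ?_
      rw [mul_assoc]
      gcongr
      calc u ^ N ≤ (l * x ^ 2 * (G * x)) ^ N := by rw [hu]; gcongr
        _ = G ^ N * (l ^ N * x ^ (N + 2 * N)) := by rw [pow_add, pow_mul]; ring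
        _ ≤ _ := by gcongr; exact hSk N (by omega)
    have b2 : |∑ k ∈ Finset.range N, (-u) ^ k / (Nat.factorial k : ℝ) - P| ≤ (∑ k ∈ Finset.range N, D k) * S := by
      rw [hP, ← Finset.sum_sub_distrib, Finset.sum_mul]
      refine (Finset.abs_sum_le_sum_abs _ _).trans (Finset.sum_le_sum fun k hk => ?_)
      have hd := hD k x hx h
      rw [trunc_eval] at hd
      have : (-u) ^ k / (Nat.factorial k : ℝ) - ∑ n ∈ Finset.range N, A n k * (l ^ k * x ^ (n + 2 * k))
        = ((-1) ^ k / (Nat.factorial k : ℝ)) * (l ^ k * x ^ (2 * k)) * (gg x ^ k - ∑ n ∈ Finset.range N, PowerSeries.coeff n (gser ^ k) * x ^ n) := by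
        rw [mul_sub, Finset.mul_sum]
        congr 1
        · rw [hu, neg_pow, pow_mul]; ring
        · exact Finset.sum_congr rfl fun n _ => by rw [hA]; ring
      rw [this, abs_mul, abs_mul, abs_of_pos (show 0 < l ^ k * x ^ (2 * k) by positivity)]
      have hf : |(-1 : ℝ) ^ k / (Nat.factorial k : ℝ)| ≤ 1 := by
        rw [abs_div, abs_pow, abs_neg, abs_one, one_pow, Nat.abs_cast]
        have hf : (1:ℝ) ≤ k.factorial := by exact_mod_cast Nat.factorial_pos k
        exact div_le_one_of_le₀ hf (by positivity)
      calc _ ≤ 1 * (l ^ k * x ^ (2 * k)) * (D k * x ^ N) := by gcongr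
        _ = D k * (l ^ k * x ^ (N + 2 * k)) := by ring
        _ ≤ _ := by
          have := hSk k (by have := Finset.mem_range.1 hk; omega)
          have := hD0 k
          gcongr
    rw [he, ← sub_mul, abs_mul, abs_of_pos hw0, ← mul_assoc]
    gcongr
    calc _ ≤ _ := abs_sub_le _ (∑ k ∈ Finset.range N, (-u) ^ k / (Nat.factorial k : ℝ)) _
      _ ≤ C1 * S := by rw [add_mul]; exact add_le_add b1 b2
      _ ≤ _ := by gcongr; linarith
  · have h2 : 1 ≤ 2 * x := by linarith
    have hSN : x ^ N ≤ S := by simpa using hSk 0 (by omega)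
    have b1 : |(Set.Ioo (0:ℝ) 1).indicator (fun x => Real.exp (-l * ph x)) x| ≤ 2 ^ N * S * w := by
      have : |(Set.Ioo (0:ℝ) 1).indicator (fun x => Real.exp (-l * ph x)) x| ≤ w := by
        by_cases hm : x ∈ Set.Ioo (0:ℝ) 1
        · rw [Set.indicator_of_mem hm, abs_of_pos (Real.exp_pos _), hw]
          apply Real.exp_le_exp.2
          have := ph_ge hm.1 hm.2
          nlinarith
        · rw [Set.indicator_of_notMem hm]; simpa using hw0.le
      refine this.trans (le_mul_of_one_le_left hw0.le ?_)
      calc (1:ℝ) ≤ (2 * x) ^ N := one_le_pow₀ h2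
        _ = 2 ^ N * x ^ N := mul_pow _ _ _
        _ ≤ _ := by gcongr
    have b2 : |P| ≤ (∑ k ∈ Finset.range N, ∑ n ∈ Finset.range N, |A n k| * 2 ^ N) * S := by
      rw [hP, Finset.sum_mul]
      refine (Finset.abs_sum_le_sum_abs _ _).trans (Finset.sum_le_sum fun k hk => ?_)
      rw [Finset.sum_mul]
      refine (Finset.abs_sum_le_sum_abs _ _).trans (Finset.sum_le_sum fun n hn => ?_)
      rw [abs_mul, abs_of_pos (show 0 < l ^ k * x ^ (n + 2 * k) by positivity), mul_assoc]
      have hk' := Finset.mem_range.1 hk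
      have hn' := Finset.mem_range.1 hn
      refine mul_le_mul_of_nonneg_left ?_ (abs_nonneg _)
      have hxn : x ^ n ≤ 2 ^ N * x ^ N := by
        obtain ⟨d, rfl⟩ := Nat.exists_eq_add_of_lt hn'
        have h1 : (1:ℝ) ≤ 2 ^ n := one_le_pow₀ (by norm_num)
        have h3 : 1 ≤ (2 * x) ^ (d+1) := one_le_pow₀ h2
        have : (2:ℝ) ^ (n+d+1) * x ^ (n+d+1) = 2 ^ n * ((2*x)^(d+1) * x ^ n) := by
          rw [mul_pow]; ring
        rw [this]
        have h4 : 0 < x ^ n := by positivity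
        have h5 : x ^ n ≤ (2*x)^(d+1) * x ^ n := le_mul_of_one_le_left h4.le h3
        exact h5.trans (le_mul_of_one_le_left (by positivity) h1)
      calc l ^ k * x ^ (n + 2 * k) = l ^ k * x ^ (2*k) * x ^ n := by ring
        _ ≤ l ^ k * x ^ (2*k) * (2 ^ N * x ^ N) := by gcongr
        _ = 2 ^ N * (l ^ k * x ^ (N + 2 * k)) := by ring
        _ ≤ _ := by gcongr; exact hSk k (by omega)
    refine (abs_sub _ _).trans ?_
    rw [abs_mul, abs_of_pos hw0]
    calc _ ≤ 2 ^ N * S * w + (∑ k ∈ Finset.range N, ∑ n ∈ Finset.range N, |A n k| * 2 ^ N) * S * w := by gcongr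
      _ = C2 * (S * w) := by simp only [C2]; ring
      _ ≤ _ := by gcongr; linarith

lemma gauss_int {l : ℝ} (hl : 0 < l) (q : ℕ) :
    IntegrableOn (fun x : ℝ => x ^ q * Real.exp (-(l/2) * x ^ 2)) (Set.Ioi 0) := by
  have := integrableOn_rpow_mul_exp_neg_mul_sq (b := l/2) (by positivity) (s := q)
    (by have : (0:ℝ) ≤ q := by positivity
        linarith)
  simpa only [Real.rpow_natCast] using this

lemma gauss_val {l : ℝ} (hl : 0 < l) (n k : ℕ) :
    l ^ k * ∫ x in Set.Ioi (0:ℝ), x ^ (n + 2 * k) * Real.exp (-(l/2) * x ^ 2) =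
      (1 / 2) * (2:ℝ) ^ (((n:ℝ)+1)/2 + k) * Real.Gamma (((n:ℝ)+1)/2 + k) *
        l ^ (-(((n:ℝ)+1)/2)) := by
  have h := integral_rpow_mul_exp_neg_mul_rpow (p := 2) (q := ((n + 2 * k : ℕ) : ℝ)) (b := l/2)
    two_pos (by have : (0:ℝ) ≤ ((n + 2 * k : ℕ) : ℝ) := by positivity
                linarith) (by positivity)
  simp only [Real.rpow_natCast, Real.rpow_two] at h
  rw [h]
  have e1 : (((n + 2 * k : ℕ) : ℝ) + 1) / 2 = ((n:ℝ)+1)/2 + k := by push_cast; ring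
  have e2 : -(((n + 2 * k : ℕ) : ℝ) + 1) / 2 = -(((n:ℝ)+1)/2 + k) := by push_cast; ring
  rw [e1, e2, Real.div_rpow hl.le two_pos.le, Real.rpow_neg two_pos.le, neg_add,
    Real.rpow_add hl, Real.rpow_neg hl.le (k:ℝ), Real.rpow_natCast]
  have : l ^ k ≠ 0 := by positivity
  field_simp

lemma obell_refl (n k : ℕ) : obell (fun m => (-1 : ℝ) ^ m / ((m : ℝ) + 2)) n k =
    (-1) ^ n * PowerSeries.coeff n (gser ^ k) := by
  have : (PowerSeries.mk fun m => if m = 0 then 0 else (-1 : ℝ) ^ m / ((m : ℝ) + 2)) =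
      PowerSeries.rescale (-1) gser := by
    ext m
    rw [PowerSeries.coeff_rescale, gser, PowerSeries.coeff_mk, PowerSeries.coeff_mk]
    split_ifs
    · simp
    · ring
  rw [obell, this, ← map_pow, PowerSeries.coeff_rescale]

lemma gser_coeff_zero {n k : ℕ} (h : n < k) : PowerSeries.coeff n (gser ^ k) = 0 := by
  have : PowerSeries.X ∣ gser := by
    rw [PowerSeries.X_dvd_iff, ← PowerSeries.coeff_zero_eq_constantCoeff_apply]
    simp [gser]
  exact PowerSeries.X_pow_dvd_iff.1 (pow_dvd_pow_of_dvd this k) n h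

lemma term_eq {l : ℝ} (hl : 0 < l) {n N : ℕ} (hn : n < N) :
    Real.Gamma (((n : ℝ) + 1) / 2) * ((-1 : ℝ) ^ n * laplaceCoeff n) *
              l ^ (-(((n : ℝ) + 1) / 2)) =
    ∑ k ∈ Finset.range N, ((-1) ^ k / (Nat.factorial k : ℝ) *
        PowerSeries.coeff n (gser ^ k)) *
        (l ^ k * ∫ x in Set.Ioi (0:ℝ), x ^ (n + 2 * k) * Real.exp (-(l/2) * x ^ 2)) := by
  have hsub : Finset.range (n+1) ⊆ Finset.range N := Finset.range_subset_range.2 hn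
  rw [← Finset.sum_subset hsub]
  · have hG : Real.Gamma (((n : ℝ) + 1) / 2) ≠ 0 := (Real.Gamma_pos_of_pos (by positivity)).ne'
    have hs : ((-1:ℝ)^n) * (-1)^n = 1 := by rw [← mul_pow]; simp
    rw [laplaceCoeff]
    set T := ∑ k ∈ Finset.range (n + 1),
      ((-1 : ℝ) ^ k * (2 : ℝ) ^ (((n : ℝ) + 1) / 2 + k) / (Nat.factorial k : ℝ)) *
        Real.Gamma (((n : ℝ) + 1) / 2 + k) *
        obell (fun m => (-1 : ℝ) ^ m / ((m : ℝ) + 2)) n k with hT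
    have : Real.Gamma (((n : ℝ) + 1) / 2) * ((-1 : ℝ) ^ n *
        (1 / (2 * Real.Gamma (((n : ℝ) + 1) / 2)) * T)) * l ^ (-(((n : ℝ) + 1) / 2)) =
        T * ((-1) ^ n * (1 / 2) * l ^ (-(((n : ℝ) + 1) / 2))) := by field_simp
    rw [this, hT, Finset.sum_mul]
    refine Finset.sum_congr rfl fun k _ => ?_
    rw [gauss_val hl, obell_refl]
    linear_combination ((-1 : ℝ) ^ k * (2 : ℝ) ^ (((n : ℝ) + 1) / 2 + k) / (Nat.factorial k : ℝ)) *
        Real.Gamma (((n : ℝ) + 1) / 2 + k) * PowerSeries.coeff n (gser ^ k) * (1 / 2) *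
        l ^ (-(((n : ℝ) + 1) / 2)) * hs
  · intro k _ hk
    rw [gser_coeff_zero (by simpa using hk)]; simp

lemma F_int {l : ℝ} (hl : 0 < l) :
    IntegrableOn (fun x => Real.exp (-l * ph x)) (Set.Ioo (0:ℝ) 1) := by
  refine Measure.integrableOn_of_bounded (M := 1) (by simp) ?_ ?_
  · apply Measurable.aestronglyMeasurable
    unfold ph
    fun_prop
  · refine (ae_restrict_iff' measurableSet_Ioo).2 (Eventually.of_forall fun x hx => ?_)
    rw [Real.norm_eq_abs, abs_of_pos (Real.exp_pos _)]
    apply Real.exp_le_one_iff.2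
    have := ph_ge hx.1 hx.2
    have h2 : 0 ≤ x ^ 2 / 2 := by positivity
    nlinarith

/-- Asymptotic expansion of `∫_0^1 e^{-λ(-x - log(1-x))} dx` as `λ → +∞`: the
coefficients are `(-1)^n c_n`, where `c_n` are the coefficients for
`∫_0^∞ e^{-λ(x - log(1+x))} dx`. -/
theorem laplace_integral_expansion_reflected (N : ℕ) :
    (fun l : ℝ =>
        (∫ x in Set.Ioo (0 : ℝ) 1, Real.exp (-l * (-x - Real.log (1 - x)))) -
          ∑ n ∈ Finset.range N,
            Real.Gamma (((n : ℝ) + 1) / 2) * ((-1 : ℝ) ^ n * laplaceCoeff n) *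
              l ^ (-(((n : ℝ) + 1) / 2)))
      =O[atTop] fun l : ℝ => l ^ (-(((N : ℝ) + 1) / 2)) := by
  obtain ⟨C, hC0, hC⟩ := pointwise N
  set K : ℝ := ∑ k ∈ Finset.range (N+1), (1 / 2) * (2:ℝ) ^ (((N:ℝ)+1)/2 + k) *
    Real.Gamma (((N:ℝ)+1)/2 + k) with hK
  refine IsBigO.of_bound (C * K) ?_
  filter_upwards [eventually_gt_atTop (0:ℝ)] with l hl
  rw [Real.norm_eq_abs, Real.norm_eq_abs, abs_of_pos (Real.rpow_pos_of_pos hl _)]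
  set w : ℕ → ℝ → ℝ := fun q x => x ^ q * Real.exp (-(l/2) * x ^ 2) with hw
  have hwi : ∀ q, Integrable (w q) (volume.restrict (Set.Ioi 0)) := fun q => gauss_int hl q
  have hF : ∫ x in Set.Ioo (0 : ℝ) 1, Real.exp (-l * (-x - Real.log (1 - x))) =
      ∫ x in Set.Ioi (0:ℝ), (Set.Ioo (0:ℝ) 1).indicator (fun x => Real.exp (-l * ph x)) x := by
    rw [setIntegral_indicator measurableSet_Ioo,
      Set.inter_eq_right.2 (fun x hx => hx.1)]
    rfl
  have hFi : Integrable ((Set.Ioo (0:ℝ) 1).indicator (fun x => Real.exp (-l * ph x)))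
      (volume.restrict (Set.Ioi 0)) :=
    ((integrable_indicator_iff measurableSet_Ioo).2 (F_int hl)).restrict
  set A : ℕ → ℕ → ℝ := fun n k => (-1) ^ k / (Nat.factorial k : ℝ) *
        PowerSeries.coeff n (gser ^ k) with hA
  have hPi : ∀ n k, Integrable (fun x => A n k * (l ^ k * w (n + 2 * k) x))
      (volume.restrict (Set.Ioi 0)) := fun n k => ((hwi _).const_mul _).const_mul _
  have hP : ∑ n ∈ Finset.range N,
            Real.Gamma (((n : ℝ) + 1) / 2) * ((-1 : ℝ) ^ n * laplaceCoeff n) *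
              l ^ (-(((n : ℝ) + 1) / 2)) =
      ∫ x in Set.Ioi (0:ℝ), ∑ n ∈ Finset.range N, ∑ k ∈ Finset.range N,
        A n k * (l ^ k * w (n + 2 * k) x) := by
    rw [integral_finset_sum _ fun n _ => integrable_finset_sum _ fun k _ => hPi n k]
    refine Finset.sum_congr rfl fun n hn => ?_
    rw [integral_finset_sum _ fun k _ => hPi n k, term_eq hl (Finset.mem_range.1 hn)]
    refine Finset.sum_congr rfl fun k _ => ?_
    rw [integral_const_mul, integral_const_mul]
  have hR : ∫ x in Set.Ioi (0:ℝ), C * ∑ k ∈ Finset.range (N+1), l ^ k * w (N + 2 * k) x =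
      C * K * l ^ (-(((N : ℝ) + 1) / 2)) := by
    rw [integral_const_mul, integral_finset_sum _ fun k _ => (hwi _).const_mul _, mul_assoc, hK,
      Finset.sum_mul]
    congr 1
    refine Finset.sum_congr rfl fun k _ => ?_
    rw [integral_const_mul]
    exact gauss_val hl N k
  rw [hF, hP, ← integral_sub hFi
    (integrable_finset_sum _ fun n _ => integrable_finset_sum _ fun k _ => hPi n k), ← hR,
    ← Real.norm_eq_abs]
  refine norm_integral_le_of_norm_le
    ((integrable_finset_sum _ fun k _ => (hwi _).const_mul _).const_mul _) ?_
  refine (ae_restrict_iff' measurableSet_Ioi).2 (Eventually.of_forall fun x hx => ?_)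
  exact hC l x hl hx
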